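/- Let A and B be two nonempty sets of real numbers. Then A ∪ B is a B₀-set if and only if A + B is a B₀-set. -/

import Mathlib

/-!
The forward implication is the inequality `|sin (u + v)| ≤ |sin u| + |sin v|`, with the same
sequence of frequencies.

For the converse, let `f` witness that `A + B` is a B₀-set and fix `a₀ ∈ A`, `b₀ ∈ B`.
By compactness, differences `g k = f (n k) - f (m k)` can be chosen strictly increasing in `k`, with
`m` and `n` strictly increasing and with both `|sin (π g(k) a₀)|` and `|sin (π g(k) b₀)|` at most
`(1/2)^k` (`exists_good_pair`, `exists_diff_seq`). For `a ∈ A` write `a = (a + b₀) - b₀`: then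
`|sin (π g(k) a)|` is at most the sum of the terms of index `n k` and `m k` of the convergent series
at `a + b₀ ∈ A + B`, plus `(1/2)^k`. Summing over `k` gives a bound independent of `a`, and points
of `B` are treated symmetrically (`sum_bound_of_diff`). A uniform bound on the full series is enough
because the starting index, which is also the required bound, may be increased (`isB0Set_of_bound`).
-/

open Filter Real Set

/-- `X` is a B₀-set: there are a strictly increasing `f : ℕ → ℕ` and `n₀ ∈ ℕ`
such that for all `x ∈ X`, `∑_{n ≥ n₀} |sin (π f(n) x)|` converges and is `≤ n₀`. -/
def IsB0Set (X : Set ℝ) : Prop :=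
  ∃ f : ℕ → ℕ, StrictMono f ∧
    ∃ n₀ : ℕ, ∀ x ∈ X,
      (Summable fun n => |Real.sin (π * f (n + n₀) * x)|) ∧
      ∑' n, |Real.sin (π * f (n + n₀) * x)| ≤ n₀

theorem abs_sin_add_le (u v : ℝ) : |sin (u + v)| ≤ |sin u| + |sin v| := by
  rw [sin_add]
  calc |sin u * cos v + cos u * sin v| ≤ |sin u * cos v| + |cos u * sin v| := abs_add_le _ _
    _ = |sin u| * |cos v| + |cos u| * |sin v| := by rw [abs_mul, abs_mul]
    _ ≤ |sin u| + |sin v| := by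
      have h1 := abs_cos_le_one u
      have h2 := abs_cos_le_one v
      nlinarith [abs_nonneg (sin u), abs_nonneg (sin v)]

theorem abs_sin_sub_le (u v : ℝ) : |sin (u - v)| ≤ |sin u| + |sin v| := by
  simpa [sub_eq_add_neg] using abs_sin_add_le u (-v)

/-- Lets closeness of `(sin u, cos u)` and `(sin v, cos v)` control `sin (u - v)`. -/
theorem abs_sin_sub_le_diff (u v : ℝ) :
    |sin (u - v)| ≤ |sin u - sin v| + |cos u - cos v| := by
  have h : sin (u - v) = (sin u - sin v) * cos v - (cos u - cos v) * sin v := by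
    rw [sin_sub]; ring
  rw [h]
  refine (abs_sub _ _).trans ?_
  rw [abs_mul, abs_mul]
  have h1 := abs_cos_le_one v
  have h2 := abs_sin_le_one v
  nlinarith [abs_nonneg (sin u - sin v), abs_nonneg (cos u - cos v)]

theorem sum_le_of_comp {F : ℕ → ℝ} {C : ℝ} (h0 : ∀ n, 0 ≤ F n) (hs : Summable F)
    (hC : ∑' n, F n ≤ C) {m : ℕ → ℕ} (hm : Function.Injective m) :
    (Summable fun n => F (m n)) ∧ ∑' n, F (m n) ≤ C :=
  ⟨hs.comp_injective hm, (tsum_comp_le_tsum_of_inj hs h0 hm).trans hC⟩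

/-- The starting index and the integer bound in `IsB0Set` can be replaced by a real bound on the
full series: dropping initial terms only decreases the sum. -/
theorem isB0Set_of_bound {X : Set ℝ} {f : ℕ → ℕ} (hf : StrictMono f) (C : ℝ)
    (h : ∀ x ∈ X, (Summable fun n => |sin (π * f n * x)|) ∧ ∑' n, |sin (π * f n * x)| ≤ C) :
    IsB0Set X := by
  refine ⟨f, hf, ⌈C⌉₊, fun x hx => ?_⟩
  obtain ⟨h1, h2⟩ := sum_le_of_comp (fun _ => abs_nonneg _) (h x hx).1 (h x hx).2
    (add_left_injective ⌈C⌉₊)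
  exact ⟨h1, h2.trans (Nat.le_ceil C)⟩

/-- There are arbitrarily large indices `m`, `n` for which `f n - f m` is large and both
`(f n - f m) * a` and `(f n - f m) * b` are close to integers. -/
theorem exists_good_pair {f : ℕ → ℕ} (hf : StrictMono f) (a b : ℝ) {ε : ℝ} (hε : 0 < ε) (M : ℕ) :
    ∃ m n : ℕ, M < m ∧ M < n ∧ f m + M < f n ∧
      |sin (π * f n * a - π * f m * a)| ≤ ε ∧ |sin (π * f n * b - π * f m * b)| ≤ ε := by
  let F : ℕ → (ℝ × ℝ) × (ℝ × ℝ) := fun n =>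
    ((sin (π * f n * a), cos (π * f n * a)), (sin (π * f n * b), cos (π * f n * b)))
  have hF : ∀ n, F n ∈ (Icc (-1 : ℝ) 1 ×ˢ Icc (-1 : ℝ) 1) ×ˢ (Icc (-1 : ℝ) 1 ×ˢ Icc (-1 : ℝ) 1) :=
    fun n => ⟨⟨sin_mem_Icc _, cos_mem_Icc _⟩, ⟨sin_mem_Icc _, cos_mem_Icc _⟩⟩
  obtain ⟨l, -, φ, hφ, hl⟩ := ((isCompact_Icc.prod isCompact_Icc).prod
    (isCompact_Icc.prod isCompact_Icc)).tendsto_subseq hF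
  obtain ⟨N, hN⟩ := Metric.cauchySeq_iff.1 hl.cauchySeq (ε / 2) (half_pos hε)
  set p := max N (M + 1) with hp
  set q := max p (f (φ p) + M + 1) with hq
  have h1 := hφ.id_le p
  have h2 := hφ.id_le q
  have h3 := hf.id_le (φ q)
  simp only [id] at h1 h2 h3
  have hd := hN q (by omega) p (by omega)
  simp only [F, Function.comp, Prod.dist_eq, Real.dist_eq, max_lt_iff] at hd
  obtain ⟨⟨d1, d2⟩, d3, d4⟩ := hd
  refine ⟨φ p, φ q, by omega, by omega, by omega, ?_, ?_⟩
  · exact (abs_sin_sub_le_diff _ _).trans (by linarith)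
  · exact (abs_sin_sub_le_diff _ _).trans (by linarith)

theorem exists_diff_seq {f : ℕ → ℕ} (hf : StrictMono f) (a b : ℝ) :
    ∃ m n : ℕ → ℕ, StrictMono m ∧ StrictMono n ∧ (∀ k, f (m k) ≤ f (n k)) ∧
      (StrictMono fun k => f (n k) - f (m k)) ∧
      (∀ k, |sin (π * f (n k) * a - π * f (m k) * a)| ≤ (1 / 2) ^ k) ∧
      (∀ k, |sin (π * f (n k) * b - π * f (m k) * b)| ≤ (1 / 2) ^ k) := by
  -- The third component `j` records the precision; it grows strictly, hence is at least `k`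
  -- at stage `k`.
  obtain ⟨s, hP, hr⟩ := exists_seq_of_forall_finset_exists
    (fun t : ℕ × ℕ × ℕ => f t.1 ≤ f t.2.1 ∧
      |sin (π * f t.2.1 * a - π * f t.1 * a)| ≤ (1 / 2) ^ t.2.2 ∧
      |sin (π * f t.2.1 * b - π * f t.1 * b)| ≤ (1 / 2) ^ t.2.2)
    (fun t u => t.1 < u.1 ∧ t.2.1 < u.2.1 ∧ t.2.2 < u.2.2 ∧ f t.2.1 - f t.1 < f u.2.1 - f u.1)
    (by
      intro S _
      set M := S.sup fun t => t.1 + t.2.1 + t.2.2 + f t.2.1 with hM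
      obtain ⟨m, n, h1, h2, h3, h4, h5⟩ := exists_good_pair hf a b
        (show (0 : ℝ) < (1 / 2) ^ (M + 1) by positivity) M
      refine ⟨(m, n, M + 1), ⟨by dsimp only; omega, h4, h5⟩, fun t ht => ?_⟩
      have : t.1 + t.2.1 + t.2.2 + f t.2.1 ≤ M :=
        Finset.le_sup (f := fun t : ℕ × ℕ × ℕ => t.1 + t.2.1 + t.2.2 + f t.2.1) ht
      dsimp only
      omega)
  have hj : StrictMono fun k => (s k).2.2 := fun i k h => (hr i k h).2.2.1
  have hpow : ∀ k, (1 / 2 : ℝ) ^ (s k).2.2 ≤ (1 / 2) ^ k := fun k =>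
    pow_le_pow_of_le_one (by norm_num) (by norm_num) (hj.id_le k)
  exact ⟨fun k => (s k).1, fun k => (s k).2.1, fun i k h => (hr i k h).1,
    fun i k h => (hr i k h).2.1, fun k => (hP k).1, fun i k h => (hr i k h).2.2.2,
    fun k => (hP k).2.1.trans (hpow k), fun k => (hP k).2.2.trans (hpow k)⟩

/-- Passing from the series at `x + y` with frequencies `f` to the series at `x` with frequencies
`f (n k) - f (m k)`, when the products of these differences with `y` are close to integers. -/
theorem sum_bound_of_diff {f m n : ℕ → ℕ} (hm : StrictMono m) (hn : StrictMono n)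
    (hle : ∀ k, f (m k) ≤ f (n k)) {x y C : ℝ}
    (hy : ∀ k, |sin (π * f (n k) * y - π * f (m k) * y)| ≤ (1 / 2) ^ k)
    (hs : Summable fun k => |sin (π * f k * (x + y))|)
    (hC : ∑' k, |sin (π * f k * (x + y))| ≤ C) :
    (Summable fun k => |sin (π * (f (n k) - f (m k) : ℕ) * x)|) ∧
      ∑' k, |sin (π * (f (n k) - f (m k) : ℕ) * x)| ≤ C + C + 2 := by
  obtain ⟨n1, n2⟩ := sum_le_of_comp (fun _ => abs_nonneg _) hs hC hn.injective
  obtain ⟨m1, m2⟩ := sum_le_of_comp (fun _ => abs_nonneg _) hs hC hm.injective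
  have hle' : ∀ k, |sin (π * (f (n k) - f (m k) : ℕ) * x)| ≤
      |sin (π * f (n k) * (x + y))| + |sin (π * f (m k) * (x + y))| + (1 / 2) ^ k := by
    intro k
    have e : π * ((f (n k) - f (m k) : ℕ) : ℝ) * x =
        (π * f (n k) * (x + y) - π * f (m k) * (x + y)) -
          (π * f (n k) * y - π * f (m k) * y) := by
      rw [Nat.cast_sub (hle k)]; ring
    rw [e]
    exact (abs_sin_sub_le _ _).trans (add_le_add (abs_sin_sub_le _ _) (hy k))
  have hsum := (n1.add m1).add summable_geometric_two
  have hs' := Summable.of_nonneg_of_le (fun _ => abs_nonneg _) hle' hsum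
  refine ⟨hs', (hs'.tsum_le_tsum hle' hsum).trans ?_⟩
  rw [(n1.add m1).tsum_add summable_geometric_two, n1.tsum_add m1, tsum_geometric_two]
  linarith

open Pointwise in
theorem b0set_union_iff_sum (A B : Set ℝ) (hA : A.Nonempty) (hB : B.Nonempty) :
    IsB0Set (A ∪ B) ↔ IsB0Set (A + B) := by
  constructor
  · rintro ⟨f, hf, n₀, h⟩
    refine isB0Set_of_bound (f := fun n => f (n + n₀))
      (hf.comp (add_left_strictMono (a := n₀))) (n₀ + n₀) ?_
    rintro _ ⟨a, ha, b, hb, rfl⟩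
    obtain ⟨a1, a2⟩ := h a (Or.inl ha)
    obtain ⟨b1, b2⟩ := h b (Or.inr hb)
    have hle : ∀ n, |sin (π * f (n + n₀) * (a + b))| ≤
        |sin (π * f (n + n₀) * a)| + |sin (π * f (n + n₀) * b)| := fun n => by
      rw [mul_add]; exact abs_sin_add_le _ _
    have hs := Summable.of_nonneg_of_le (fun _ => abs_nonneg _) hle (a1.add b1)
    refine ⟨hs, (hs.tsum_le_tsum hle (a1.add b1)).trans ?_⟩
    rw [a1.tsum_add b1]
    exact add_le_add a2 b2
  · rintro ⟨f₀, hf₀, n₀, h⟩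
    obtain ⟨a₀, ha₀⟩ := hA
    obtain ⟨b₀, hb₀⟩ := hB
    set f : ℕ → ℕ := fun n => f₀ (n + n₀) with hfdef
    have hf : StrictMono f := hf₀.comp (add_left_strictMono (a := n₀))
    obtain ⟨m, n, hm, hn, hle, hg, h1, h2⟩ := exists_diff_seq hf a₀ b₀
    refine isB0Set_of_bound hg (n₀ + n₀ + 2) ?_
    rintro x (hx | hx)
    · obtain ⟨s1, s2⟩ := h (x + b₀) (add_mem_add hx hb₀)
      exact sum_bound_of_diff hm hn hle h2 s1 s2
    · obtain ⟨s1, s2⟩ := h (a₀ + x) (add_mem_add ha₀ hx)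
      rw [add_comm a₀ x] at s1 s2
      exact sum_bound_of_diff hm hn hle h1 s1 s2
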